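/- arXiv:1710.03625 — 2 statements merged into one kernel-verified Lean document; each statement's English description precedes it below -/
import Mathlib

section
/- Let X, Y be real Banach spaces such that X admits a modulus of convexity of power type 2, i.e. there exists γ > 0 with δ_X(ε) ≥ γε² for all ε ∈ (0, 2]. Let Ω ⊆ X be open nonempty, f : Ω → Y and x₀ ∈ Ω. Assume f is differentiable with Lipschitz continuous derivative on int B(x₀, r₀) ⊆ Ω for some r₀ > 0, and Df(x₀) is surjective. Then there exists ρ ∈ (0, r₀) such that for every r-convex set S ⊆ B(x₀, ρ) with r ∈ (0, ρ) and f(S) closed, there exists c' > 0 with f(S) ∈ U_{c'}(Y); in particular f(S) is uniformly convex. -/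
open Metric Set
open scoped NNReal ENNReal

/-- The modulus of convexity of a set `S` in a real normed space:
`δ_S(ε) = sup{δ ≥ 0 : B((x₁+x₂)/2, δ) ⊆ S for all x₁, x₂ ∈ S with ‖x₁ − x₂‖ = ε}`. -/
noncomputable def setModulus {X : Type*} [NormedAddCommGroup X] [NormedSpace ℝ X]
    (S : Set X) (ε : ℝ) : ℝ :=
  sSup {δ : ℝ | 0 ≤ δ ∧ ∀ x₁ ∈ S, ∀ x₂ ∈ S, ‖x₁ - x₂‖ = ε →
    closedBall (midpoint ℝ x₁ x₂) δ ⊆ S}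

/-- The exact bound of Lipschitz continuity of `h` on `U`:
the infimum of all Lipschitz constants of `h` on `U`. -/
noncomputable def lipOn {α β : Type*} [PseudoMetricSpace α] [PseudoMetricSpace β]
    (h : α → β) (U : Set α) : ℝ :=
  sInf {ℓ : ℝ | 0 ≤ ℓ ∧ ∀ x₁ ∈ U, ∀ x₂ ∈ U, dist (h x₁) (h x₂) ≤ ℓ * dist x₁ x₂}

/-- The exact regularity bound of `f` around `x₀`: the infimum of all `κ ≥ 0` such that,
for some `δ > 0`, `dist(x, f⁻¹(y)) ≤ κ‖y − f(x)‖` for all `x ∈ B(x₀, δ)`, `y ∈ B(f(x₀), δ)`;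
it equals `+∞` when `f` is not metrically regular around `x₀`. -/
noncomputable def regBound {X Y : Type*} [NormedAddCommGroup X] [NormedAddCommGroup Y]
    (f : X → Y) (x₀ : X) : ℝ≥0∞ :=
  sInf (ENNReal.ofReal '' {κ : ℝ | 0 ≤ κ ∧ ∃ δ > 0,
    ∀ x ∈ closedBall x₀ δ, ∀ y ∈ closedBall (f x₀) δ,
      Metric.infDist x {x' | f x' = y} ≤ κ * ‖y - f x‖})

/-- `S ∈ U_c(X)`: `S` is a nonempty closed convex set whose modulus of convexity
satisfies `δ_S(ε) ≥ cε²` for all `ε ∈ (0, diam S)`. -/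
def UniformlyConvexWith {X : Type*} [NormedAddCommGroup X] [NormedSpace ℝ X]
    (c : ℝ) (S : Set X) : Prop :=
  S.Nonempty ∧ IsClosed S ∧ Convex ℝ S ∧
    ∀ ε : ℝ, 0 < ε → ε < Metric.diam S → c * ε ^ 2 ≤ setModulus S ε

/-- The modulus of convexity of a normed space
`δ_X(ε) = inf{1 − ‖(x₁+x₂)/2‖ : x₁, x₂ ∈ B̄(0,1), ‖x₁ − x₂‖ = ε}`. -/
noncomputable def spaceModulus (X : Type*) [NormedAddCommGroup X] [NormedSpace ℝ X]
    (ε : ℝ) : ℝ :=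
  sInf {d : ℝ | ∃ x₁ ∈ closedBall (0 : X) 1, ∃ x₂ ∈ closedBall (0 : X) 1,
    ‖x₁ - x₂‖ = ε ∧ d = 1 - ‖midpoint ℝ x₁ x₂‖}

/-- `S` is `r`-convex (strongly convex of radius `r`): a nonempty intersection
`⋂_{x ∈ M} B̄(x, r)` for some `M ⊊ X`. -/
def RConvex {X : Type*} [NormedAddCommGroup X] (r : ℝ) (S : Set X) : Prop :=
  S.Nonempty ∧ ∃ M : Set X, M ≠ Set.univ ∧ S = ⋂ x ∈ M, closedBall x r

/-- `f` is open at a linear rate around `x₀`. -/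
def OpenAtLinearRate {X Y : Type*} [PseudoMetricSpace X] [PseudoMetricSpace Y]
    (f : X → Y) (x₀ : X) : Prop :=
  ∃ δ > (0 : ℝ), ∃ ζ > (0 : ℝ), ∃ σ > (0 : ℝ), ∀ x ∈ closedBall x₀ δ, ∀ r ∈ Icc (0 : ℝ) δ,
    closedBall (f x) (σ * r) ∩ closedBall (f x₀) ζ ⊆ f '' closedBall x r

/-!
Call a set midpoint strongly convex if it contains a ball of radius `c ‖x - y‖ ^ 2` around the
midpoint of any two of its points `x`, `y`. In a space whose modulus of convexity is of power type
2, an `r`-convex set has this property with a constant `c` of order `1 / r`, hence as large as we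
like when `r` is small. By Graves' theorem `f` maps the ball around the midpoint `m` of `x` and `y`
onto a set containing a ball around `f m` with radius of order `c ‖x - y‖ ^ 2`. A second-order
Taylor estimate places the midpoint of `f x` and `f y` within `K / 4 * ‖x - y‖ ^ 2` of `f m`, where
`K` is a Lipschitz constant of the derivative, so this ball still contains a ball around that
midpoint once `c` is large compared to `K`.

This also forces the image to be closed. A limit `y` of points `f (x n)` that is not attained stays
outside all the balls around the midpoints of `f (x n)` and `f (x m)`, whose radii must therefore
tend to zero. Thus `x` is a Cauchy sequence, and `y` is the image of its limit.
-/

open Filter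
open scoped Topology

theorem ordConnected_of_isClosed_of_midpoint_mem {T : Set ℝ} (hT : IsClosed T)
    (hmid : ∀ x ∈ T, ∀ y ∈ T, midpoint ℝ x y ∈ T) : T.OrdConnected := by
  refine ⟨fun x hx y hy t ht => ?_⟩
  obtain ⟨a, ⟨haT, hxa, hat⟩, ha_max⟩ :=
    (isCompact_Icc.inter_left hT).exists_isGreatest ⟨x, hx, left_mem_Icc.2 ht.1⟩
  obtain ⟨b, ⟨hbT, htb, hby⟩, hb_min⟩ :=
    (isCompact_Icc.inter_left hT).exists_isLeast ⟨y, hy, right_mem_Icc.2 ht.2⟩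
  have hmT : (a + b) / 2 ∈ T := by
    simpa only [midpoint_eq_smul_add, invOf_eq_inv, smul_eq_mul, inv_mul_eq_div]
      using hmid a haT b hbT
  have hba : b ≤ a := by
    rcases le_total ((a + b) / 2) t with hmt | htm
    · linarith [ha_max ⟨hmT, by linarith, hmt⟩]
    · linarith [hb_min ⟨hmT, htm, by linarith⟩]
  rwa [← hat.antisymm (htb.trans hba)]

theorem convex_of_isClosed_of_midpoint_mem {E : Type*} [AddCommGroup E] [Module ℝ E]
    [TopologicalSpace E] [IsTopologicalAddGroup E] [ContinuousSMul ℝ E] {S : Set E}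
    (hS : IsClosed S) (hmid : ∀ x ∈ S, ∀ y ∈ S, midpoint ℝ x y ∈ S) : Convex ℝ S := by
  refine convex_iff_segment_subset.2 fun x hx y hy => ?_
  let g : ℝ →ᵃ[ℝ] E := AffineMap.lineMap x y
  have hconn : (g ⁻¹' S).OrdConnected :=
    ordConnected_of_isClosed_of_midpoint_mem (hS.preimage AffineMap.lineMap_continuous)
      fun s hs t ht => by simpa only [mem_preimage, g.map_midpoint] using hmid _ hs _ ht
  rw [segment_eq_image_lineMap]
  exact image_subset_iff.2 (hconn.out (by simpa [g] using hx) (by simpa [g] using hy))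

theorem exists_dist_eq_of_lt_diam {α : Type*} [PseudoMetricSpace α] {S : Set α}
    (hS : IsPreconnected S) {ε : ℝ} (hε : 0 ≤ ε) (hdiam : ε < diam S) :
    ∃ x ∈ S, ∃ y ∈ S, dist x y = ε := by
  obtain ⟨x, hx, y, hy, hxy⟩ : ∃ x ∈ S, ∃ y ∈ S, ε < dist x y := by
    by_contra! h
    exact hdiam.not_ge (diam_le_of_forall_dist_le hε h)
  obtain ⟨z, hz, hxz⟩ := hS.intermediate_value hx hy (f := dist x) (by fun_prop)
    ⟨by rwa [dist_self], hxy.le⟩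
  exact ⟨x, hx, z, hz, hxz⟩

/-- A set containing the closed ball of radius `c * ‖x - y‖ ^ 2` around the midpoint of any two of
its points: the pointwise form of a modulus of convexity of power type 2. -/
def MidpointStronglyConvex {E : Type*} [NormedAddCommGroup E] [NormedSpace ℝ E]
    (c : ℝ) (S : Set E) : Prop :=
  ∀ x ∈ S, ∀ y ∈ S, closedBall (midpoint ℝ x y) (c * ‖x - y‖ ^ 2) ⊆ S

namespace MidpointStronglyConvex

variable {E : Type*} [NormedAddCommGroup E] [NormedSpace ℝ E] {b c : ℝ} {S : Set E}

theorem anti (hS : MidpointStronglyConvex c S) (hbc : b ≤ c) : MidpointStronglyConvex b S :=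
  fun x hx y hy => (closedBall_subset_closedBall (by gcongr)).trans (hS x hx y hy)

theorem iInter {ι : Sort*} {S : ι → Set E} (hS : ∀ i, MidpointStronglyConvex c (S i)) :
    MidpointStronglyConvex c (⋂ i, S i) := fun x hx y hy =>
  subset_iInter fun i => hS i x (mem_iInter.1 hx i) y (mem_iInter.1 hy i)

theorem midpoint_mem (hS : MidpointStronglyConvex c S) (hc : 0 ≤ c) {x y : E} (hx : x ∈ S)
    (hy : y ∈ S) : midpoint ℝ x y ∈ S :=
  hS x hx y hy (mem_closedBall_self (by positivity))

theorem convex (hS : MidpointStronglyConvex c S) (hc : 0 ≤ c) (hclosed : IsClosed S) :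
    Convex ℝ S :=
  convex_of_isClosed_of_midpoint_mem hclosed fun _ hx _ hy => hS.midpoint_mem hc hx hy

theorem le_setModulus (hS : MidpointStronglyConvex c S) (hc : 0 ≤ c) (hconn : IsPreconnected S)
    {ε : ℝ} (hε : 0 < ε) (hdiam : ε < diam S) : c * ε ^ 2 ≤ setModulus S ε := by
  obtain ⟨x, hx, y, hy, hxy⟩ := exists_dist_eq_of_lt_diam hconn hε.le hdiam
  have : Nontrivial E := ⟨x, y, dist_pos.1 (hxy ▸ hε)⟩
  have hbdd : Bornology.IsBounded S := by
    by_contra h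
    exact (hε.trans hdiam).ne' (diam_eq_zero_of_unbounded h)
  refine le_csSup ⟨diam S, ?_⟩ ⟨by positivity, fun u hu v hv huv => huv ▸ hS u hu v hv⟩
  rintro δ ⟨hδ, hball⟩
  calc δ ≤ 2 * δ := by linarith
    _ = diam (closedBall (midpoint ℝ x y) δ) := (diam_closedBall_eq _ hδ).symm
    _ ≤ diam S := diam_mono (hball x hx y hy (by rwa [← dist_eq_norm])) hbdd

theorem uniformlyConvexWith (hS : MidpointStronglyConvex c S) (hc : 0 ≤ c) (hne : S.Nonempty)
    (hclosed : IsClosed S) : UniformlyConvexWith c S :=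
  have hconv := hS.convex hc hclosed
  ⟨hne, hclosed, hconv, fun _ => hS.le_setModulus hc hconv.isPreconnected⟩

end MidpointStronglyConvex

theorem RConvex.isClosed {X : Type*} [NormedAddCommGroup X] {r : ℝ} {S : Set X}
    (hS : RConvex r S) : IsClosed S := by
  obtain ⟨-, M, -, rfl⟩ := hS
  exact isClosed_biInter fun _ _ => isClosed_closedBall

section RConvex

variable {X : Type*} [NormedAddCommGroup X] [NormedSpace ℝ X]

theorem norm_midpoint_le_one_sub_spaceModulus {x y : X} (hx : ‖x‖ ≤ 1) (hy : ‖y‖ ≤ 1) :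
    ‖midpoint ℝ x y‖ ≤ 1 - spaceModulus X ‖x - y‖ := by
  rw [← mem_closedBall_zero_iff] at hx hy
  refine le_sub_comm.1 (csInf_le ⟨0, ?_⟩ ⟨x, hx, y, hy, rfl, rfl⟩)
  rintro _ ⟨u, hu, v, hv, -, rfl⟩
  exact sub_nonneg.2 (mem_closedBall_zero_iff.1 ((convex_closedBall 0 1).midpoint_mem hu hv))

variable {γ r : ℝ} (hγ : ∀ ε : ℝ, 0 < ε → ε ≤ 2 → γ * ε ^ 2 ≤ spaceModulus X ε)
include hγ

theorem norm_midpoint_le_one_sub_mul_sq {x y : X} (hx : ‖x‖ ≤ 1) (hy : ‖y‖ ≤ 1) :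
    ‖midpoint ℝ x y‖ ≤ 1 - γ * ‖x - y‖ ^ 2 := by
  rcases eq_or_ne x y with rfl | hxy
  · simpa using hx
  have hle : ‖x - y‖ ≤ 2 := by linarith [norm_sub_le x y]
  linarith [norm_midpoint_le_one_sub_spaceModulus hx hy, hγ _ (norm_sub_pos_iff.2 hxy) hle]

theorem dist_midpoint_le_sub_mul_sq (hr : 0 < r) {a x y : X} (hx : x ∈ closedBall a r)
    (hy : y ∈ closedBall a r) : dist (midpoint ℝ x y) a ≤ r - γ / r * ‖x - y‖ ^ 2 := by
  have hunit : ∀ z ∈ closedBall a r, ‖r⁻¹ • (z - a)‖ ≤ 1 := fun z hz => by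
    rwa [norm_smul_of_nonneg (inv_nonneg.2 hr.le), inv_mul_le_one₀ hr, ← mem_closedBall_iff_norm]
  have hmid : midpoint ℝ (r⁻¹ • (x - a)) (r⁻¹ • (y - a)) = r⁻¹ • (midpoint ℝ x y - a) := by
    simp only [midpoint_eq_smul_add, invOf_eq_inv]
    module
  have hrescaled := norm_midpoint_le_one_sub_mul_sq hγ (hunit x hx) (hunit y hy)
  rw [hmid, ← smul_sub, sub_sub_sub_cancel_right, norm_smul_of_nonneg (inv_nonneg.2 hr.le),
    norm_smul_of_nonneg (inv_nonneg.2 hr.le), inv_mul_le_iff₀ hr] at hrescaled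
  rw [dist_eq_norm]
  exact hrescaled.trans_eq (by field_simp)

theorem midpointStronglyConvex_closedBall (hr : 0 < r) (a : X) :
    MidpointStronglyConvex (γ / r) (closedBall a r) := fun x hx y hy =>
  closedBall_subset_closedBall' (by linarith [dist_midpoint_le_sub_mul_sq hγ hr hx hy])

theorem RConvex.midpointStronglyConvex (hr : 0 < r) {S : Set X} (hS : RConvex r S) :
    MidpointStronglyConvex (γ / r) S := by
  obtain ⟨-, M, -, rfl⟩ := hS
  exact .iInter fun a => .iInter fun _ => midpointStronglyConvex_closedBall hγ hr a

end RConvex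

section Image

variable {X Y : Type*} [NormedAddCommGroup X] [NormedAddCommGroup Y] [NormedSpace ℝ Y]

/-- The set `f '' S` contains, around the midpoint of `f x` and `f y`, the closed ball whose radius
`b * ‖x - y‖ ^ 2` is measured in the domain. -/
def MidpointStronglyConvexImage (b : ℝ) (f : X → Y) (S : Set X) : Prop :=
  ∀ x ∈ S, ∀ y ∈ S, closedBall (midpoint ℝ (f x) (f y)) (b * ‖x - y‖ ^ 2) ⊆ f '' S

namespace MidpointStronglyConvexImage

variable {b : ℝ} {f : X → Y} {S : Set X}

theorem mul_norm_sub_sq_lt (h : MidpointStronglyConvexImage b f S) {y : Y} (hy : y ∉ f '' S)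
    {x x' : X} (hx : x ∈ S) (hx' : x' ∈ S) {δ : ℝ} (hxδ : f x ∈ ball y δ)
    (hxδ' : f x' ∈ ball y δ) : b * ‖x - x'‖ ^ 2 < δ :=
  calc b * ‖x - x'‖ ^ 2 < dist y (midpoint ℝ (f x) (f x')) :=
        not_le.1 fun hle => hy (h x hx x' hx' hle)
    _ < δ := mem_ball'.1 ((convex_ball y δ).midpoint_mem hxδ hxδ')

theorem isClosed_image (h : MidpointStronglyConvexImage b f S) (hb : 0 < b) (hS : IsComplete S)
    (hf : ContinuousOn f S) : IsClosed (f '' S) := by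
  refine isClosed_of_closure_subset fun y hy => ?_
  obtain ⟨u, hu, hlim⟩ := mem_closure_iff_seq_limit.1 hy
  choose x hxS hxu using hu
  obtain rfl : f ∘ x = u := funext hxu
  by_contra hyS
  have hcauchy : CauchySeq x := Metric.cauchySeq_iff'.2 fun ε hε => by
    obtain ⟨N, hN⟩ := eventually_atTop.1 (hlim (ball_mem_nhds y (by positivity : 0 < b * ε ^ 2)))
    refine ⟨N, fun n hn => ?_⟩
    have hsq := h.mul_norm_sub_sq_lt hyS (hxS n) (hxS N) (hN n hn) (hN N le_rfl)
    rw [dist_eq_norm]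
    exact lt_of_pow_lt_pow_left₀ 2 hε.le (lt_of_mul_lt_mul_left hsq hb.le)
  obtain ⟨a, haS, ha⟩ := cauchySeq_tendsto_of_isComplete hS hxS hcauchy
  have hfa : Tendsto (f ∘ x) atTop (𝓝 (f a)) :=
    (hf a haS).tendsto.comp (tendsto_nhdsWithin_iff.2 ⟨ha, .of_forall hxS⟩)
  exact hyS ⟨a, haS, tendsto_nhds_unique hfa hlim⟩

theorem midpointStronglyConvex (h : MidpointStronglyConvexImage b f S) (hb : 0 ≤ b) {L : ℝ≥0}
    (hL : LipschitzOnWith L f S) : MidpointStronglyConvex (b / L ^ 2) (f '' S) := by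
  rintro _ ⟨x, hx, rfl⟩ _ ⟨y, hy, rfl⟩
  refine (closedBall_subset_closedBall ?_).trans (h x hx y hy)
  rw [div_mul_eq_mul_div]
  refine div_le_of_le_mul₀ (by positivity) (by positivity) ?_
  calc b * ‖f x - f y‖ ^ 2 ≤ b * (L * ‖x - y‖) ^ 2 := by
        gcongr
        exact hL.norm_sub_le hx hy
    _ = b * ‖x - y‖ ^ 2 * L ^ 2 := by ring

theorem uniformlyConvexWith (h : MidpointStronglyConvexImage b f S) (hb : 0 < b) {L : ℝ≥0}
    (hL : LipschitzOnWith L f S) (hne : S.Nonempty) (hS : IsComplete S) :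
    UniformlyConvexWith (b / L ^ 2) (f '' S) :=
  (h.midpointStronglyConvex hb.le hL).uniformlyConvexWith (by positivity) (hne.image f)
    (h.isClosed_image hb hS hL.continuousOn)

end MidpointStronglyConvexImage

end Image

section LipschitzDerivative

variable {X Y : Type*} [NormedAddCommGroup X] [NormedSpace ℝ X] [NormedAddCommGroup Y]
  [NormedSpace ℝ Y] {f : X → Y} {f' : X → X →L[ℝ] Y} {S : Set X} {K : ℝ≥0}

theorem approximatesLinearOn_of_lipschitzOnWith_deriv (hS : Convex ℝ S)
    (hf : ∀ x ∈ S, HasFDerivWithinAt f (f' x) S x) (hf' : LipschitzOnWith K f' S) {a : X}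
    (ha : a ∈ S) {ρ : ℝ≥0} (hSρ : S ⊆ closedBall a ρ) :
    ApproximatesLinearOn f (f' a) S (K * ρ) := fun x hx y hy =>
  hS.norm_image_sub_le_of_norm_hasFDerivWithin_le' hf
    (fun z hz => (hf'.norm_sub_le hz ha).trans (by
      push_cast
      gcongr
      exact mem_closedBall_iff_norm.1 (hSρ hz))) hy hx

theorem norm_image_sub_sub_le_of_lipschitzOnWith_deriv (hS : Convex ℝ S)
    (hf : ∀ x ∈ S, HasFDerivWithinAt f (f' x) S x) (hf' : LipschitzOnWith K f' S) {a x : X}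
    (ha : a ∈ S) (hx : x ∈ S) : ‖f x - f a - f' a (x - a)‖ ≤ K * ‖x - a‖ ^ 2 := by
  have ha' : a ∈ S ∩ closedBall a ‖x - a‖₊ := ⟨ha, mem_closedBall_self (by positivity)⟩
  have happrox : ApproximatesLinearOn f (f' a) (S ∩ closedBall a ‖x - a‖₊) (K * ‖x - a‖₊) :=
    approximatesLinearOn_of_lipschitzOnWith_deriv (hS.inter (convex_closedBall _ _))
      (fun z hz => (hf z hz.1).mono inter_subset_left) (hf'.mono inter_subset_left) ha'
      inter_subset_right
  exact (happrox x ⟨hx, mem_closedBall_iff_norm.2 le_rfl⟩ a ha').trans_eq (by push_cast; ring)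

theorem norm_midpoint_image_sub_image_midpoint_le (hS : Convex ℝ S)
    (hf : ∀ x ∈ S, HasFDerivWithinAt f (f' x) S x) (hf' : LipschitzOnWith K f' S) {x y : X}
    (hx : x ∈ S) (hy : y ∈ S) :
    ‖midpoint ℝ (f x) (f y) - f (midpoint ℝ x y)‖ ≤ K / 4 * ‖x - y‖ ^ 2 := by
  set m := midpoint ℝ x y with hm
  have hxm : ‖x - m‖ = ‖x - y‖ / 2 := by
    rw [← dist_eq_norm, dist_left_midpoint, dist_eq_norm, Real.norm_two, inv_mul_eq_div]
  have hym : ‖y - m‖ = ‖x - y‖ / 2 := by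
    rw [← dist_eq_norm, dist_right_midpoint, dist_eq_norm, Real.norm_two, inv_mul_eq_div]
  have htaylor : ∀ z ∈ S, ‖z - m‖ = ‖x - y‖ / 2 →
      f z - f m - f' m (z - m) ∈ closedBall 0 (K / 4 * ‖x - y‖ ^ 2) := fun z hz hzm => by
    have hle := norm_image_sub_sub_le_of_lipschitzOnWith_deriv hS hf hf' (hS.midpoint_mem hx hy) hz
    rw [← hm, hzm] at hle
    exact mem_closedBall_zero_iff.2 (hle.trans_eq (by ring))
  -- The first-order terms at `x` and `y` are opposite.
  have hmean : midpoint ℝ (f x) (f y) - f m =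
      midpoint ℝ (f x - f m - f' m (x - m)) (f y - f m - f' m (y - m)) := by
    rw [hm, left_sub_midpoint, right_sub_midpoint, ← neg_sub x y, smul_neg, map_neg]
    simp only [midpoint_eq_smul_add, invOf_eq_inv]
    module
  rw [hmean, ← mem_closedBall_zero_iff]
  exact (convex_closedBall _ _).midpoint_mem (htaylor x hx hxm) (htaylor y hy hym)

theorem MidpointStronglyConvex.image [CompleteSpace X] {c : ℝ} (hS : MidpointStronglyConvex c S)
    (hc : 0 ≤ c) (hconv : Convex ℝ S) (hf : ∀ x ∈ S, HasFDerivWithinAt f (f' x) S x)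
    (hf' : LipschitzOnWith K f' S) {A : X →L[ℝ] Y} {κ : ℝ≥0} (hA : ApproximatesLinearOn f A S κ)
    (R : A.NonlinearRightInverse) :
    MidpointStronglyConvexImage (((R.nnnorm : ℝ)⁻¹ - κ) * c - K / 4) f S := fun x hx y hy =>
  calc closedBall (midpoint ℝ (f x) (f y)) ((((R.nnnorm : ℝ)⁻¹ - κ) * c - K / 4) * ‖x - y‖ ^ 2)
    _ ⊆ closedBall (f (midpoint ℝ x y)) (((R.nnnorm : ℝ)⁻¹ - κ) * (c * ‖x - y‖ ^ 2)) := by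
      refine closedBall_subset_closedBall' ?_
      rw [dist_eq_norm]
      linarith [norm_midpoint_image_sub_image_midpoint_le hconv hf hf' hx hy]
    _ ⊆ f '' closedBall (midpoint ℝ x y) (c * ‖x - y‖ ^ 2) :=
      hA.surjOn_closedBall_of_nonlinearRightInverse R (by positivity) (hS x hx y hy)
    _ ⊆ f '' S := image_mono (hS x hx y hy)

theorem eventually_uniformlyConvexWith_image [CompleteSpace X] [CompleteSpace Y] {U : Set X}
    {x₀ : X} (hU : U ∈ 𝓝 x₀) (hf : ∀ x ∈ U, HasFDerivWithinAt f (f' x) U x)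
    (hf' : LipschitzOnWith K f' U) (hsurj : Function.Surjective (f' x₀)) {γ : ℝ} (hγ : 0 < γ) :
    ∀ᶠ ρ in 𝓝[>] (0 : ℝ), ∃ c > 0, ∀ S ⊆ closedBall x₀ ρ, S.Nonempty → IsClosed S →
      MidpointStronglyConvex (γ / ρ) S → UniformlyConvexWith c (f '' S) := by
  have hrange := LinearMap.range_eq_top.2 hsurj
  let R := (f' x₀).nonlinearRightInverseOfSurjective hrange
  have hR : 0 < (R.nnnorm : ℝ) := (f' x₀).nonlinearRightInverseOfSurjective_nnnorm_pos hrange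
  have hsmall : ∀ᶠ ρ : ℝ in 𝓝 0, K / 4 * ρ < ((R.nnnorm : ℝ)⁻¹ - K * ρ) * γ :=
    ContinuousAt.eventually_lt (by fun_prop) (by fun_prop)
      (by simp only [mul_zero, sub_zero]; positivity)
  filter_upwards [nhdsWithin_le_nhds (eventually_closedBall_subset hU),
    nhdsWithin_le_nhds hsmall, self_mem_nhdsWithin] with ρ hρU hρ (hρ0 : 0 < ρ)
  lift ρ to ℝ≥0 using hρ0.le
  have happrox : ApproximatesLinearOn f (f' x₀) (closedBall x₀ ρ) (K * ρ) :=
    approximatesLinearOn_of_lipschitzOnWith_deriv (convex_closedBall x₀ ρ)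
      (fun x hx => (hf x (hρU hx)).mono hρU) (hf'.mono hρU)
      (mem_closedBall_self ρ.2) subset_rfl
  set L : ℝ≥0 := ‖f' x₀‖₊ + K * ρ + 1
  have hL : LipschitzOnWith L f (closedBall x₀ ρ) :=
    (lipschitzOnWith_iff_restrict.2 happrox.lipschitz).weaken le_self_add
  set b : ℝ := ((R.nnnorm : ℝ)⁻¹ - (K * ρ : ℝ≥0)) * (γ / ρ) - K / 4
  have hb : 0 < b := by
    rw [sub_pos, ← mul_div_assoc, lt_div_iff₀ hρ0]
    exact_mod_cast hρ
  refine ⟨b / L ^ 2, by positivity, fun S hSρ hne hclosed hS => ?_⟩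
  have hc : 0 ≤ γ / ρ := by positivity
  have himage : MidpointStronglyConvexImage b f S :=
    hS.image hc (hS.convex hc hclosed) (fun x hx => (hf x (hρU (hSρ hx))).mono (hSρ.trans hρU))
      (hf'.mono (hSρ.trans hρU)) (happrox.mono_set hSρ) R
  exact himage.uniformlyConvexWith hb (hL.mono hSρ) hne hclosed.isComplete

end LipschitzDerivative

theorem polyak_convexity_principle_strongly_convex_general
    {X Y : Type*} [NormedAddCommGroup X] [NormedSpace ℝ X] [CompleteSpace X]
    [NormedAddCommGroup Y] [NormedSpace ℝ Y] [CompleteSpace Y]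
    (hX : ∃ γ : ℝ, 0 < γ ∧ ∀ ε : ℝ, 0 < ε → ε ≤ 2 → γ * ε ^ 2 ≤ spaceModulus X ε)
    (f : X → Y) (x₀ : X) (r₀ : ℝ) (hr₀ : 0 < r₀)
    (hdiff : ∀ x ∈ ball x₀ r₀, DifferentiableAt ℝ f x)
    (hlip : ∃ K : ℝ≥0, LipschitzOnWith K (fderiv ℝ f) (ball x₀ r₀))
    (hsurj : Function.Surjective (fderiv ℝ f x₀)) :
    ∃ ρ : ℝ, 0 < ρ ∧ ρ < r₀ ∧ ∃ c' : ℝ, 0 < c' ∧ ∀ r : ℝ, 0 < r → r ≤ ρ →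
      ∀ S : Set X, RConvex r S → S ⊆ closedBall x₀ ρ → UniformlyConvexWith c' (f '' S) := by
  obtain ⟨γ, hγ, hmodulus⟩ := hX
  obtain ⟨K, hK⟩ := hlip
  have hevent := eventually_uniformlyConvexWith_image (ball_mem_nhds x₀ hr₀)
    (fun x hx => (hdiff x hx).hasFDerivAt.hasFDerivWithinAt) hK hsurj hγ
  obtain ⟨ρ, ⟨c, hc, himage⟩, hρ0, hρr₀⟩ := (hevent.and (Ioo_mem_nhdsGT hr₀)).exists
  refine ⟨ρ, hρ0, hρr₀, c, hc, fun r hr hrρ S hS hSρ => himage S hSρ hS.1 hS.isClosed ?_⟩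
  exact (hS.midpointStronglyConvex hmodulus hr).anti (by gcongr)

/-- Corollary 3.2 of the paper: in a space whose modulus of convexity is of power
type 2, images of small strongly convex sets under a `C^{1,1}` mapping with
surjective derivative are uniformly convex. -/
theorem polyak_convexity_principle_strongly_convex
    {X Y : Type*} [NormedAddCommGroup X] [NormedSpace ℝ X] [CompleteSpace X]
    [NormedAddCommGroup Y] [NormedSpace ℝ Y] [CompleteSpace Y]
    -- (i) X admits a modulus of convexity of power type 2
    (hX : ∃ γ : ℝ, 0 < γ ∧ ∀ ε : ℝ, 0 < ε → ε ≤ 2 → γ * ε ^ 2 ≤ spaceModulus X ε)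
    (Ω : Set X) (hΩopen : IsOpen Ω) (hΩne : Ω.Nonempty)
    (f : X → Y) (x₀ : X) (hx₀ : x₀ ∈ Ω)
    (r₀ : ℝ) (hr₀ : 0 < r₀) (hballΩ : ball x₀ r₀ ⊆ Ω)
    -- (ii) f ∈ C^{1,1}(int B(x₀, r₀))
    (hdiff : ∀ x ∈ ball x₀ r₀, DifferentiableAt ℝ f x)
    (hlip : ∃ K : ℝ≥0, LipschitzOnWith K (fderiv ℝ f) (ball x₀ r₀))
    -- (iii) Df(x₀) is onto
    (hsurj : Function.Surjective (fderiv ℝ f x₀)) :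
    ∃ ρ : ℝ, 0 < ρ ∧ ρ < r₀ ∧ ∀ r : ℝ, 0 < r → r < ρ → ∀ S : Set X, RConvex r S →
      S ⊆ closedBall x₀ ρ → IsClosed (f '' S) →
      ∃ c' : ℝ, 0 < c' ∧ UniformlyConvexWith c' (f '' S) := by
  obtain ⟨ρ, hρ0, hρr₀, c', hc', himage⟩ :=
    polyak_convexity_principle_strongly_convex_general hX f x₀ r₀ hr₀ hdiff hlip hsurj
  exact ⟨ρ, hρ0, hρr₀, fun r hr hrρ S hS hSρ _ => ⟨c', hc', himage r hr hrρ.le S hS hSρ⟩⟩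
end

section
/- Let X, Y be real Banach spaces, Ω ⊆ X open nonempty, f : Ω → Y, x₀ ∈ Ω and c > 0. Assume f is differentiable with Lipschitz continuous derivative on int B(x₀, r₀) ⊆ Ω for some r₀ > 0, Df(x₀) is surjective, and reg(f, x₀) · lip(Df, int B(x₀, r₀)) / 8 < c. Then there exists ρ > 0 such that for every S ∈ U_c(X) with S ⊆ B(x₀, ρ) and f(S) closed, and for every closed convex cone C ⊆ Y with apex at the origin, the mapping f is convex-like on S with respect to C: for every x₁, x₂ ∈ S and t ∈ [0,1] there exists x_t ∈ S such that (1−t)f(x₁) + t f(x₂) ∈ f(x_t) + C. -/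
/-!
Let `L` be the Lipschitz constant of `Df` and `m` the midpoint of `x₁, x₂ ∈ S`. Expanding `f`
around `m`, the linear terms cancel, so the midpoint `y` of `f x₁, f x₂` lies within
`L / 8 * ‖x₁ - x₂‖ ^ 2` of `f m`. Metric regularity with modulus `κ` solves `f x = y` at distance
at most about `κ * L / 8 * ‖x₁ - x₂‖ ^ 2` from `m`. Since `κ * L / 8 < c`, this `x` lies in the ball
of radius `c * ‖x₁ - x₂‖ ^ 2` around `m`, which uniform convexity puts inside `S`. So the closed set
`f '' S` is stable under midpoints, hence convex, and every `(1 - t) • f x₁ + t • f x₂` is already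
a value of `f` on `S`, with cone component `0`.
-/

open Metric Set
open scoped NNReal ENNReal

open scoped Topology

section MidpointConvex

theorem ordConnected_of_forall_midpoint_mem {T : Set ℝ} (hT : IsClosed T)
    (hmid : ∀ a ∈ T, ∀ b ∈ T, midpoint ℝ a b ∈ T) : T.OrdConnected := by
  refine ordConnected_iff.2 fun a ha b hb _ t ht => ?_
  by_contra htT
  -- `t` would lie in a gap `(u, v)` of `T`, but the midpoint of the gap is in `T`.
  obtain ⟨u, ⟨huT, -, hut⟩, hu_max⟩ :=
    (isCompact_Icc.inter_left hT).exists_isGreatest ⟨a, ha, le_rfl, ht.1⟩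
  obtain ⟨v, ⟨hvT, htv, -⟩, hv_min⟩ :=
    (isCompact_Icc.inter_left hT).exists_isLeast ⟨b, hb, ht.2, le_rfl⟩
  have hau : a ≤ u := hu_max ⟨ha, le_rfl, ht.1⟩
  have hvb : v ≤ b := hv_min ⟨hb, ht.2, le_rfl⟩
  have hut' : u < t := hut.lt_of_ne (ne_of_mem_of_not_mem huT htT)
  have htv' : t < v := htv.lt_of_ne (ne_of_mem_of_not_mem hvT htT).symm
  have hmT := hmid u huT v hvT
  have hum : u < midpoint ℝ u v := (left_lt_lineMap_iff_lt (by norm_num)).2 (hut'.trans htv')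
  have hmv : midpoint ℝ u v < v := (lineMap_lt_right_iff_lt (by norm_num)).2 (hut'.trans htv')
  rcases le_total (midpoint ℝ u v) t with h | h
  · exact hum.not_ge (hu_max ⟨hmT, hau.trans hum.le, h⟩)
  · exact hmv.not_ge (hv_min ⟨hmT, h, hmv.le.trans hvb⟩)

theorem convex_of_isClosed_of_forall_midpoint_mem {E : Type*} [AddCommGroup E] [Module ℝ E]
    [TopologicalSpace E] [IsTopologicalAddGroup E] [ContinuousSMul ℝ E] {A : Set E}
    (hA : IsClosed A) (hmid : ∀ a ∈ A, ∀ b ∈ A, midpoint ℝ a b ∈ A) : Convex ℝ A := by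
  refine convex_iff_segment_subset.2 fun a ha b hb => ?_
  rw [segment_eq_image_lineMap, image_subset_iff]
  have hline : (AffineMap.lineMap (k := ℝ) a b ⁻¹' A).OrdConnected := by
    refine ordConnected_of_forall_midpoint_mem
      (hA.preimage AffineMap.lineMap_continuous) fun u hu v hv => ?_
    rw [mem_preimage, AffineMap.map_midpoint]
    exact hmid _ hu _ hv
  exact hline.out (by simpa using ha) (by simpa using hb)

end MidpointConvex

section LipschitzDerivative

variable {X Y : Type*} [NormedAddCommGroup X] [NormedSpace ℝ X]
  [NormedAddCommGroup Y] [NormedSpace ℝ Y] {f : X → Y} {f' : X → X →L[ℝ] Y} {U : Set X}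

theorem norm_image_add_sub_sub_le_of_norm_fderivWithin_sub_le {L : ℝ} {x h : X}
    (hU : StarConvex ℝ x U) (hf : ∀ z ∈ U, HasFDerivWithinAt f (f' z) U z)
    (hL : ∀ z ∈ U, ‖f' z - f' x‖ ≤ L * ‖z - x‖) (hxh : x + h ∈ U) :
    ‖f (x + h) - f x - f' x h‖ ≤ L / 2 * ‖h‖ ^ 2 := by
  have hmaps : MapsTo (fun t : ℝ => x + t • h) (Icc 0 1) U := fun t ht =>
    hU.add_smul_mem hxh ht.1 ht.2
  let g : ℝ → Y := fun t => f (x + t • h) - f x - t • f' x h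
  have hg : ∀ t ∈ Icc (0 : ℝ) 1,
      HasDerivWithinAt g ((f' (x + t • h) - f' x) h) (Icc 0 1) t := by
    intro t ht
    have hline : HasDerivWithinAt (fun s : ℝ => x + s • h) h (Icc 0 1) t := by
      simpa using ((hasDerivWithinAt_id t _).smul_const h).const_add x
    have hlinear : HasDerivWithinAt (fun s : ℝ => s • f' x h) (f' x h) (Icc 0 1) t := by
      simpa using (hasDerivWithinAt_id t _).smul_const (f' x h)
    exact (((hf _ (hmaps ht)).comp_hasDerivWithinAt t hline hmaps).sub_const (f x)).sub hlinear
  have hbound : ∀ t ∈ Ico (0 : ℝ) 1, ‖(f' (x + t • h) - f' x) h‖ ≤ L * ‖h‖ ^ 2 * t := by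
    intro t ht
    calc ‖(f' (x + t • h) - f' x) h‖ ≤ ‖f' (x + t • h) - f' x‖ * ‖h‖ :=
          ContinuousLinearMap.le_opNorm _ _
      _ ≤ L * ‖x + t • h - x‖ * ‖h‖ := by
          gcongr
          exact hL _ (hmaps (Ico_subset_Icc_self ht))
      _ = L * ‖h‖ ^ 2 * t := by
          rw [add_sub_cancel_left, norm_smul, Real.norm_of_nonneg ht.1]
          ring
  have hmajorant : ∀ t : ℝ,
      HasDerivAt (fun t => L / 2 * ‖h‖ ^ 2 * t ^ 2) (L * ‖h‖ ^ 2 * t) t := fun t =>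
    ((hasDerivAt_pow 2 t).const_mul (L / 2 * ‖h‖ ^ 2)).congr_deriv (by
      push_cast
      ring)
  simpa [g] using image_norm_le_of_norm_deriv_right_le_deriv_boundary
    (fun t ht => (hg t ht).continuousWithinAt)
    (fun t ht => (hg t (Ico_subset_Icc_self ht)).mono_of_mem_nhdsWithin (Icc_mem_nhdsGE_of_mem ht))
    (by simp [g]) hmajorant hbound (right_mem_Icc.2 zero_le_one)

theorem norm_midpoint_image_sub_image_midpoint_le_s4 {K : ℝ≥0} (hU : Convex ℝ U)
    (hf : ∀ z ∈ U, HasFDerivWithinAt f (f' z) U z) (hK : LipschitzOnWith K f' U)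
    {x₁ x₂ : X} (h₁ : x₁ ∈ U) (h₂ : x₂ ∈ U) :
    ‖midpoint ℝ (f x₁) (f x₂) - f (midpoint ℝ x₁ x₂)‖ ≤ K / 8 * ‖x₁ - x₂‖ ^ 2 := by
  set m := midpoint ℝ x₁ x₂ with hm_def
  have hm : m ∈ U := hU.midpoint_mem h₁ h₂
  obtain ⟨h, hh⟩ : ∃ h : X, h = (1 / 2 : ℝ) • (x₁ - x₂) := ⟨_, rfl⟩
  have hadd : m + h = x₁ := by
    rw [hh, hm_def, midpoint_eq_smul_add, invOf_eq_inv]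
    module
  have hsub : m + -h = x₂ := by
    rw [hh, hm_def, midpoint_eq_smul_add, invOf_eq_inv]
    module
  have htaylor : ∀ v : X, m + v ∈ U → ‖f (m + v) - f m - f' m v‖ ≤ K / 2 * ‖v‖ ^ 2 := fun v =>
    norm_image_add_sub_sub_le_of_norm_fderivWithin_sub_le (hU hm) hf
      fun z hz => hK.norm_sub_le hz hm
  have hnorm : ‖h‖ = ‖x₁ - x₂‖ / 2 := by
    rw [hh, norm_smul, Real.norm_of_nonneg (by norm_num)]
    ring
  have hcancel : midpoint ℝ (f x₁) (f x₂) - f m =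
      midpoint ℝ (f (m + h) - f m - f' m h) (f (m + -h) - f m - f' m (-h)) := by
    rw [hadd, hsub, map_neg, midpoint_eq_smul_add, midpoint_eq_smul_add, invOf_eq_inv]
    module
  have hball := (convex_closedBall (0 : Y) (K / 2 * ‖h‖ ^ 2)).midpoint_mem
    (mem_closedBall_zero_iff.2 (htaylor h (hadd ▸ h₁)))
    (mem_closedBall_zero_iff.2 (norm_neg h ▸ htaylor (-h) (hsub ▸ h₂)))
  calc ‖midpoint ℝ (f x₁) (f x₂) - f m‖ ≤ K / 2 * ‖h‖ ^ 2 := by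
        rw [hcancel]
        exact mem_closedBall_zero_iff.1 hball
    _ = K / 8 * ‖x₁ - x₂‖ ^ 2 := by
        rw [hnorm]
        ring

theorem lipschitzOnWith_lipOn {α β : Type*} [PseudoMetricSpace α] [PseudoMetricSpace β]
    {h : α → β} {U : Set α} {K : ℝ≥0} (hK : LipschitzOnWith K h U) :
    LipschitzOnWith (lipOn h U).toNNReal h U := by
  refine LipschitzOnWith.of_dist_le_mul fun x hx y hy => ?_
  rw [Real.coe_toNNReal (lipOn h U) (Real.sInf_nonneg fun _ hℓ => hℓ.1)]
  rcases (dist_nonneg (x := x) (y := y)).eq_or_lt with hxy | hxy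
  · rw [← hxy, mul_zero]
    simpa [← hxy] using hK.dist_le_mul x hx y hy
  · rw [← div_le_iff₀ hxy]
    refine le_csInf ⟨K, K.2, hK.dist_le_mul⟩ fun ℓ hℓ => ?_
    exact (div_le_iff₀ hxy).2 (hℓ.2 x hx y hy)

theorem range_mem_nhds_of_surjective_fderiv [CompleteSpace X] [CompleteSpace Y] {x₀ : X}
    (hf : ∀ᶠ x in 𝓝 x₀, DifferentiableAt ℝ f x) (hcont : ContinuousAt (fderiv ℝ f) x₀)
    (hsurj : Function.Surjective (fderiv ℝ f x₀)) : range f ∈ 𝓝 (f x₀) := by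
  have hstrict : HasStrictFDerivAt f (fderiv ℝ f x₀) x₀ :=
    hasStrictFDerivAt_of_hasFDerivAt_of_continuousAt (hf.mono fun _ hx => hx.hasFDerivAt) hcont
  rw [← hstrict.map_nhds_eq_of_surj (LinearMap.range_eq_top.2 hsurj)]
  exact Filter.range_mem_map

end LipschitzDerivative

section UniformlyConvex

variable {X : Type*} [NormedAddCommGroup X] [NormedSpace ℝ X] {S : Set X} {x₁ x₂ : X}

theorem closedBall_midpoint_subset_of_lt_setModulus {r : ℝ} (h₁ : x₁ ∈ S) (h₂ : x₂ ∈ S)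
    (hr : r < setModulus S ‖x₁ - x₂‖) : closedBall (midpoint ℝ x₁ x₂) r ⊆ S := by
  rcases lt_or_ge r 0 with hneg | hnonneg
  · simp [closedBall_eq_empty.2 hneg]
  have hne : {δ : ℝ | 0 ≤ δ ∧ ∀ a ∈ S, ∀ b ∈ S, ‖a - b‖ = ‖x₁ - x₂‖ →
      closedBall (midpoint ℝ a b) δ ⊆ S}.Nonempty := by
    by_contra hempty
    rw [setModulus, not_nonempty_iff_eq_empty.1 hempty, Real.sSup_empty] at hr
    exact hr.not_ge hnonneg
  obtain ⟨δ, ⟨-, hδ⟩, hrδ⟩ := exists_lt_of_lt_csSup hne hr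
  exact (closedBall_subset_closedBall hrδ.le).trans (hδ x₁ h₁ x₂ h₂ rfl)

theorem UniformlyConvexWith.ball_midpoint_subset {c : ℝ} (hS : UniformlyConvexWith c S)
    (hbdd : Bornology.IsBounded S) (h₁ : x₁ ∈ S) (h₂ : x₂ ∈ S) :
    ball (midpoint ℝ x₁ x₂) (c * ‖x₁ - x₂‖ ^ 2) ⊆ S := by
  obtain ⟨-, -, hconv, hmod⟩ := hS
  intro x hx
  have hne : x₁ ≠ x₂ := by
    rintro rfl
    simp at hx
  -- The modulus is only controlled below `diam S`, which `‖x₁ - x₂‖` may attain: shrink the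
  -- segment slightly.
  let p : ℝ → X := fun s => AffineMap.lineMap x₁ x₂ s
  have hp : Continuous p := AffineMap.lineMap_continuous
  have hnear : ∀ᶠ s in 𝓝[>] (0 : ℝ), dist x (midpoint ℝ (p s) x₂) < c * ‖p s - x₂‖ ^ 2 := by
    have hdist : ContinuousAt (fun s => dist x (midpoint ℝ (p s) x₂)) 0 :=
      tendsto_const_nhds.dist (hp.continuousAt.midpoint tendsto_const_nhds)
    have hradius : ContinuousAt (fun s => c * ‖p s - x₂‖ ^ 2) 0 :=
      continuousAt_const.mul ((hp.continuousAt.sub continuousAt_const).norm.pow 2)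
    exact (hdist.eventually_lt hradius (by simpa [p] using hx)).filter_mono nhdsWithin_le_nhds
  obtain ⟨s, hs, hs0, hs1⟩ := (hnear.and (Ioo_mem_nhdsGT one_pos)).exists
  have hpS : p s ∈ S := hconv.lineMap_mem h₁ h₂ ⟨hs0.le, hs1.le⟩
  have hpos : 0 < dist x₁ x₂ := dist_pos.2 hne
  have hlen : ‖p s - x₂‖ = (1 - s) * dist x₁ x₂ := by
    rw [← dist_eq_norm, dist_lineMap_right, Real.norm_of_nonneg (sub_nonneg.2 hs1.le)]
  have hlen_pos : 0 < ‖p s - x₂‖ := by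
    rw [hlen]
    exact mul_pos (sub_pos.2 hs1) hpos
  have hlen_lt : ‖p s - x₂‖ < diam S := by
    rw [hlen]
    exact (mul_lt_of_lt_one_left hpos (sub_lt_self 1 hs0)).trans_le
      (dist_le_diam_of_mem hbdd h₁ h₂)
  exact closedBall_midpoint_subset_of_lt_setModulus hpS h₂
    (hs.trans_le (hmod _ hlen_pos hlen_lt)) (mem_closedBall.2 le_rfl)

end UniformlyConvex

section MetricRegularity

variable {X Y : Type*} [NormedAddCommGroup X] [NormedAddCommGroup Y] {f : X → Y} {x₀ : X}

/-- `f` is metrically regular around `x₀` with modulus `κ`. The bound says nothing at points `y`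
outside the range of `f`, since `infDist` to the empty set is `0`. -/
def MetricallyRegularWith (κ : ℝ) (f : X → Y) (x₀ : X) : Prop :=
  ∃ δ > 0, ∀ x ∈ closedBall x₀ δ, ∀ y ∈ closedBall (f x₀) δ,
    infDist x (f ⁻¹' {y}) ≤ κ * ‖y - f x‖

theorem exists_metricallyRegularWith_of_regBound_lt {b : ℝ≥0∞} (h : regBound f x₀ < b) :
    ∃ κ : ℝ≥0, κ < b ∧ MetricallyRegularWith κ f x₀ := by
  obtain ⟨_, ⟨κ, ⟨hκ, hreg⟩, rfl⟩, hlt⟩ := sInf_lt_iff.1 h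
  exact ⟨⟨κ, hκ⟩, by rwa [ENNReal.ofReal_eq_coe_nnreal hκ] at hlt, hreg⟩

theorem MetricallyRegularWith.exists_dist_lt {κ : ℝ} (hreg : MetricallyRegularWith κ f x₀)
    (hrange : range f ∈ 𝓝 (f x₀)) :
    ∃ δ > 0, ∀ x ∈ closedBall x₀ δ, ∀ y ∈ closedBall (f x₀) δ, ∀ r, κ * ‖y - f x‖ < r →
      ∃ x', f x' = y ∧ dist x x' < r := by
  obtain ⟨δ, hδ, hinf⟩ := hreg
  obtain ⟨η, hη, hηrange⟩ := nhds_basis_closedBall.mem_iff.1 hrange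
  refine ⟨min δ η, lt_min hδ hη, fun x hx y hy r hr => ?_⟩
  have hfiber : (f ⁻¹' {y}).Nonempty :=
    preimage_singleton_nonempty.2 (hηrange (closedBall_subset_closedBall (min_le_right _ _) hy))
  have hdist : infDist x (f ⁻¹' {y}) ≤ κ * ‖y - f x‖ :=
    hinf x (closedBall_subset_closedBall (min_le_left _ _) hx)
      y (closedBall_subset_closedBall (min_le_left _ _) hy)
  exact (infDist_lt_iff hfiber).1 (hdist.trans_lt hr)

theorem MetricallyRegularWith.exists_forall_midpoint_mem_image
    [NormedSpace ℝ X] [NormedSpace ℝ Y] {κ : ℝ≥0} {b c : ℝ} {U : Set X}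
    (hreg : MetricallyRegularWith κ f x₀) (hrange : range f ∈ 𝓝 (f x₀))
    (hf : ContinuousAt f x₀) (hU : U ∈ 𝓝 x₀)
    (hmid : ∀ x₁ ∈ U, ∀ x₂ ∈ U,
      ‖midpoint ℝ (f x₁) (f x₂) - f (midpoint ℝ x₁ x₂)‖ ≤ b * ‖x₁ - x₂‖ ^ 2)
    (hc : κ * b < c) :
    ∃ ρ > 0, ∀ S : Set X, UniformlyConvexWith c S → S ⊆ closedBall x₀ ρ →
      ∀ x₁ ∈ S, ∀ x₂ ∈ S, midpoint ℝ (f x₁) (f x₂) ∈ f '' S := by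
  obtain ⟨δ, hδ, hsolve⟩ := hreg.exists_dist_lt hrange
  have hgood : U ∩ (closedBall x₀ δ ∩ f ⁻¹' closedBall (f x₀) δ) ∈ 𝓝 x₀ :=
    Filter.inter_mem hU (Filter.inter_mem (closedBall_mem_nhds _ hδ)
      (hf.preimage_mem_nhds (closedBall_mem_nhds _ hδ)))
  obtain ⟨ρ, hρ, hρgood⟩ := nhds_basis_closedBall.mem_iff.1 hgood
  refine ⟨ρ, hρ, fun S hS hSρ x₁ h₁ x₂ h₂ => ?_⟩
  rcases eq_or_ne x₁ x₂ with rfl | hne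
  · simpa using mem_image_of_mem f h₁
  have hSgood := hSρ.trans hρgood
  have hm : midpoint ℝ x₁ x₂ ∈ S := hS.2.2.1.midpoint_mem h₁ h₂
  have hy : midpoint ℝ (f x₁) (f x₂) ∈ closedBall (f x₀) δ :=
    (convex_closedBall _ _).midpoint_mem (hSgood h₁).2.2 (hSgood h₂).2.2
  have hpos : 0 < ‖x₁ - x₂‖ := norm_sub_pos_iff.2 hne
  have hr : κ * ‖midpoint ℝ (f x₁) (f x₂) - f (midpoint ℝ x₁ x₂)‖ < c * ‖x₁ - x₂‖ ^ 2 :=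
    calc κ * ‖midpoint ℝ (f x₁) (f x₂) - f (midpoint ℝ x₁ x₂)‖
        ≤ κ * (b * ‖x₁ - x₂‖ ^ 2) := by
          gcongr
          exact hmid x₁ (hSgood h₁).1 x₂ (hSgood h₂).1
      _ = κ * b * ‖x₁ - x₂‖ ^ 2 := (mul_assoc _ _ _).symm
      _ < c * ‖x₁ - x₂‖ ^ 2 := by gcongr
  obtain ⟨x, hfx, hx⟩ := hsolve _ (hSgood hm).2.1 _ hy _ hr
  have hbdd : Bornology.IsBounded S := isBounded_closedBall.subset hSρ
  exact ⟨x, hS.ball_midpoint_subset hbdd h₁ h₂ (mem_ball'.2 hx), hfx⟩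

end MetricRegularity

theorem exists_forall_midpoint_mem_image_of_lipschitzOnWith_fderiv
    {X Y : Type*} [NormedAddCommGroup X] [NormedSpace ℝ X]
    [NormedAddCommGroup Y] [NormedSpace ℝ Y] {f : X → Y} {x₀ : X} {c r₀ : ℝ} {K : ℝ≥0}
    (hr₀ : 0 < r₀) (hdiff : ∀ x ∈ ball x₀ r₀, DifferentiableAt ℝ f x)
    (hK : LipschitzOnWith K (fderiv ℝ f) (ball x₀ r₀)) (hrange : range f ∈ 𝓝 (f x₀))
    (hreg : regBound f x₀ * K / 8 < ENNReal.ofReal c) :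
    ∃ ρ > 0, ∀ S : Set X, UniformlyConvexWith c S → S ⊆ closedBall x₀ ρ →
      ∀ x₁ ∈ S, ∀ x₂ ∈ S, midpoint ℝ (f x₁) (f x₂) ∈ f '' S := by
  have hmid : ∀ x₁ ∈ ball x₀ r₀, ∀ x₂ ∈ ball x₀ r₀,
      ‖midpoint ℝ (f x₁) (f x₂) - f (midpoint ℝ x₁ x₂)‖ ≤ K / 8 * ‖x₁ - x₂‖ ^ 2 :=
    fun x₁ h₁ x₂ h₂ => norm_midpoint_image_sub_image_midpoint_le_s4 (convex_ball x₀ r₀)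
      (fun z hz => (hdiff z hz).hasFDerivAt.hasFDerivWithinAt) hK h₁ h₂
  rcases eq_or_ne K 0 with rfl | hK0
  · -- `regBound f x₀` may be `∞` here, but `f` commutes with midpoints.
    refine ⟨r₀ / 2, half_pos hr₀, fun S hS hSρ x₁ h₁ x₂ h₂ => ?_⟩
    have hSball : S ⊆ ball x₀ r₀ := hSρ.trans (closedBall_subset_ball (half_lt_self hr₀))
    have hzero : ‖midpoint ℝ (f x₁) (f x₂) - f (midpoint ℝ x₁ x₂)‖ ≤ 0 := by
      simpa using hmid x₁ (hSball h₁) x₂ (hSball h₂)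
    exact ⟨_, hS.2.2.1.midpoint_mem h₁ h₂, (sub_eq_zero.1 (norm_le_zero_iff.1 hzero)).symm⟩
  · have hlt : regBound f x₀ < ENNReal.ofReal c / (K / 8) := by
      rw [ENNReal.lt_div_iff_mul_lt (by simp [hK0]) (by simp [ENNReal.div_eq_top])]
      rwa [← mul_div_assoc]
    obtain ⟨κ, hκ, hκreg⟩ := exists_metricallyRegularWith_of_regBound_lt hlt
    have hc : (κ : ℝ) * (K / 8) < c := by
      simpa using ENNReal.toReal_lt_of_lt_ofReal (ENNReal.mul_lt_of_lt_div hκ)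
    exact hκreg.exists_forall_midpoint_mem_image hrange
      (hdiff x₀ (mem_ball_self hr₀)).continuousAt (ball_mem_nhds x₀ hr₀) hmid hc

theorem convex_like_on_uniformly_convex_sets_general
    {X Y : Type*} [NormedAddCommGroup X] [NormedSpace ℝ X]
    [NormedAddCommGroup Y] [NormedSpace ℝ Y] {f : X → Y} {x₀ : X} {c r₀ : ℝ}
    (hr₀ : 0 < r₀) (hdiff : ∀ x ∈ ball x₀ r₀, DifferentiableAt ℝ f x)
    (hlip : ∃ K : ℝ≥0, LipschitzOnWith K (fderiv ℝ f) (ball x₀ r₀))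
    (hrange : range f ∈ 𝓝 (f x₀))
    (hreg : regBound f x₀ * ENNReal.ofReal (lipOn (fderiv ℝ f) (ball x₀ r₀)) / 8
      < ENNReal.ofReal c) :
    ∃ ρ > 0, ∀ S : Set X, UniformlyConvexWith c S → S ⊆ closedBall x₀ ρ →
      IsClosed (f '' S) → Convex ℝ (f '' S) := by
  obtain ⟨K, hK⟩ := hlip
  obtain ⟨ρ, hρ, hmid⟩ := exists_forall_midpoint_mem_image_of_lipschitzOnWith_fderiv hr₀ hdiff
    (lipschitzOnWith_lipOn hK) hrange hreg
  refine ⟨ρ, hρ, fun S hS hSρ hclosed =>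
    convex_of_isClosed_of_forall_midpoint_mem hclosed ?_⟩
  rintro _ ⟨x₁, h₁, rfl⟩ _ ⟨x₂, h₂, rfl⟩
  exact hmid S hS hSρ x₁ h₁ x₂ h₂

/-- Corollary 3.5 of the paper: near a regular point, a `C^{1,1}` mapping is
convex-like on uniformly convex sets of class `U_c(X)`, with respect to any
closed convex cone. -/
theorem convex_like_on_uniformly_convex_sets
    {X Y : Type*} [NormedAddCommGroup X] [NormedSpace ℝ X] [CompleteSpace X]
    [NormedAddCommGroup Y] [NormedSpace ℝ Y] [CompleteSpace Y]
    (Ω : Set X) (hΩopen : IsOpen Ω) (hΩne : Ω.Nonempty)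
    (f : X → Y) (x₀ : X) (hx₀ : x₀ ∈ Ω) (c : ℝ) (hc : 0 < c)
    (r₀ : ℝ) (hr₀ : 0 < r₀) (hballΩ : ball x₀ r₀ ⊆ Ω)
    (hdiff : ∀ x ∈ ball x₀ r₀, DifferentiableAt ℝ f x)
    (hlip : ∃ K : ℝ≥0, LipschitzOnWith K (fderiv ℝ f) (ball x₀ r₀))
    (hsurj : Function.Surjective (fderiv ℝ f x₀))
    (hreg : regBound f x₀ * ENNReal.ofReal (lipOn (fderiv ℝ f) (ball x₀ r₀)) / 8
      < ENNReal.ofReal c) :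
    ∃ ρ : ℝ, 0 < ρ ∧ ∀ S : Set X, UniformlyConvexWith c S →
      S ⊆ closedBall x₀ ρ → IsClosed (f '' S) →
      ∀ C : Set Y, IsClosed C → Convex ℝ C → (0 : Y) ∈ C →
        (∀ t : ℝ, 0 ≤ t → ∀ y ∈ C, t • y ∈ C) →
        ∀ x₁ ∈ S, ∀ x₂ ∈ S, ∀ t ∈ Icc (0 : ℝ) 1,
          ∃ xt ∈ S, ∃ yc ∈ C, (1 - t) • f x₁ + t • f x₂ = f xt + yc := by
  have hnhds : ball x₀ r₀ ∈ 𝓝 x₀ := ball_mem_nhds x₀ hr₀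
  have hrange : range f ∈ 𝓝 (f x₀) := range_mem_nhds_of_surjective_fderiv
    (Filter.mem_of_superset hnhds hdiff) (hlip.choose_spec.continuousOn.continuousAt hnhds) hsurj
  obtain ⟨ρ, hρ, hconvex⟩ :=
    convex_like_on_uniformly_convex_sets_general hr₀ hdiff hlip hrange hreg
  refine ⟨ρ, hρ, fun S hS hSρ hclosed C _ _ hC0 _ x₁ h₁ x₂ h₂ t ht => ?_⟩
  obtain ⟨xt, hxt, hfxt⟩ := hconvex S hS hSρ hclosed (mem_image_of_mem f h₁)
    (mem_image_of_mem f h₂) (sub_nonneg.2 ht.2) ht.1 (sub_add_cancel 1 t)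
  exact ⟨xt, hxt, 0, hC0, by rw [hfxt, add_zero]⟩
end
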